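/- Let G(λ) ∈ F(λ)^{p×m} have normal rank r, finite Smith–McMillan form Diag(ε_1(λ)/ψ_1(λ),…,ε_r(λ)/ψ_r(λ), 0) and invariant orders at infinity q_1 ≤ … ≤ q_r. Then the sum μ(G(λ)) of all right and left minimal indices of G(λ) satisfies μ(G(λ)) = Σ_{i=1}^r deg(ψ_i(λ)) − Σ_{i=1}^r deg(ε_i(λ)) − Σ_{i=1}^r q_i. -/

import Mathlib

open Polynomial Matrix

set_option synthInstance.maxHeartbeats 1000000

noncomputable section

variable {F : Type*} [Field F]

/-- The natural embedding of a polynomial matrix into the rational functions. -/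
def toRF {a b : Type*} (M : Matrix a b (Polynomial F)) : Matrix a b (RatFunc F) :=
  M.map (algebraMap (Polynomial F) (RatFunc F))

/-- A rational function is proper if the degree of its numerator is at most that of its
denominator. -/
def IsProperRat (r : RatFunc F) : Prop := r.num.degree ≤ r.denom.degree

/-- Degree (as a natural number) of the `j`-th column of a polynomial matrix. -/
def colDegNat {a : Type*} [Fintype a] {l : ℕ} (N : Matrix a (Fin l) (Polynomial F))
    (j : Fin l) : ℕ :=
  Finset.univ.sup fun i => (N i j).natDegree

/-- The order of a polynomial matrix: the sum of its column degrees. -/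
def matOrder {a : Type*} [Fintype a] {l : ℕ} (N : Matrix a (Fin l) (Polynomial F)) : ℕ :=
  ∑ j, colDegNat N j

/-- The multiset of column degrees of a polynomial matrix. -/
def colDegs {a : Type*} [Fintype a] {l : ℕ} (N : Matrix a (Fin l) (Polynomial F)) : Multiset ℕ :=
  Finset.univ.val.map fun j => colDegNat N j

/-- The columns of the polynomial matrix `N`, regarded as rational vectors, form a basis of
the right null-space of the rational matrix `M`. -/
def IsRightPolyBasis {a b : Type*} [Fintype a] [Fintype b] {l : ℕ}
    (M : Matrix a b (RatFunc F)) (N : Matrix b (Fin l) (Polynomial F)) : Prop :=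
  LinearIndependent (RatFunc F) (fun j : Fin l => (toRF N)ᵀ j) ∧
    Submodule.span (RatFunc F) (Set.range fun j : Fin l => (toRF N)ᵀ j) =
      LinearMap.ker M.mulVecLin

/-- The columns of the polynomial matrix `N` form a basis of the left null-space of `M`. -/
def IsLeftPolyBasis {a b : Type*} [Fintype a] [Fintype b] {l : ℕ}
    (M : Matrix a b (RatFunc F)) (N : Matrix a (Fin l) (Polynomial F)) : Prop :=
  LinearIndependent (RatFunc F) (fun j : Fin l => (toRF N)ᵀ j) ∧
    Submodule.span (RatFunc F) (Set.range fun j : Fin l => (toRF N)ᵀ j) =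
      LinearMap.ker M.vecMulLinear

/-- A right minimal basis: a right polynomial basis of least order. -/
def IsRightMinimalBasis {a b : Type*} [Fintype a] [Fintype b] {l : ℕ}
    (M : Matrix a b (RatFunc F)) (N : Matrix b (Fin l) (Polynomial F)) : Prop :=
  IsRightPolyBasis M N ∧
    ∀ (l' : ℕ) (N' : Matrix b (Fin l') (Polynomial F)), IsRightPolyBasis M N' →
      matOrder N ≤ matOrder N'

/-- A left minimal basis: a left polynomial basis of least order. -/
def IsLeftMinimalBasis {a b : Type*} [Fintype a] [Fintype b] {l : ℕ}
    (M : Matrix a b (RatFunc F)) (N : Matrix a (Fin l) (Polynomial F)) : Prop :=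
  IsLeftPolyBasis M N ∧
    ∀ (l' : ℕ) (N' : Matrix a (Fin l') (Polynomial F)), IsLeftPolyBasis M N' →
      matOrder N ≤ matOrder N'

/-- `s` is the multiset of right minimal indices of `M`. -/
def HasRightMinimalIndices {a b : Type*} [Fintype a] [Fintype b]
    (M : Matrix a b (RatFunc F)) (s : Multiset ℕ) : Prop :=
  ∃ (l : ℕ) (N : Matrix b (Fin l) (Polynomial F)), IsRightMinimalBasis M N ∧ colDegs N = s

/-- `s` is the multiset of left minimal indices of `M`. -/
def HasLeftMinimalIndices {a b : Type*} [Fintype a] [Fintype b]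
    (M : Matrix a b (RatFunc F)) (s : Multiset ℕ) : Prop :=
  ∃ (l : ℕ) (N : Matrix a (Fin l) (Polynomial F)), IsLeftMinimalBasis M N ∧ colDegs N = s

/-- A rational matrix is proper if all its entries are proper. -/
def ProperMat {a b : Type*} (M : Matrix a b (RatFunc F)) : Prop := ∀ i j, IsProperRat (M i j)

/-- A proper rational matrix is biproper if it is invertible with proper inverse. -/
def Biproper {a b : Type*} [Fintype a] [Fintype b] [DecidableEq a] [DecidableEq b]
    (B : Matrix a b (RatFunc F)) : Prop :=
  ProperMat B ∧ ∃ B' : Matrix b a (RatFunc F), ProperMat B' ∧ B * B' = 1 ∧ B' * B = 1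

/-- A square polynomial matrix is unimodular if its determinant is a unit. -/
def Unimodular {a : Type*} [Fintype a] [DecidableEq a] (U : Matrix a a (Polynomial F)) : Prop :=
  IsUnit U.det

/-- The diagonal rational matrix `Diag((1/λ)^{q₁}, …, (1/λ)^{q_r}, 0)` of size `p × m`. -/
def InfDiag (F : Type*) [Field F] (p m r : ℕ) (q : Fin r → ℤ) :
    Matrix (Fin p) (Fin m) (RatFunc F) :=
  Matrix.of fun i j =>
    if h : (i : ℕ) = (j : ℕ) ∧ (i : ℕ) < r then (RatFunc.X : RatFunc F) ^ (-(q ⟨i, h.2⟩)) else 0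

/-- `q` is the (monotone) tuple of invariant orders at infinity of `M`, i.e. `M` is equivalent
at infinity to the Smith–McMillan form at infinity with exponents `q`. -/
def HasInfOrders {p m r : ℕ} (M : Matrix (Fin p) (Fin m) (RatFunc F)) (q : Fin r → ℤ) : Prop :=
  Monotone q ∧
    ∃ (B₁ : Matrix (Fin p) (Fin p) (RatFunc F)) (B₂ : Matrix (Fin m) (Fin m) (RatFunc F)),
      Biproper B₁ ∧ Biproper B₂ ∧ B₁ * M * B₂ = InfDiag F p m r q

/-- The finite Smith–McMillan form `Diag(ε₁/ψ₁, …, ε_r/ψ_r, 0)` of size `p × m`. -/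
def SMDiag (p m r : ℕ) (ε ψ : Fin r → Polynomial F) : Matrix (Fin p) (Fin m) (RatFunc F) :=
  Matrix.of fun i j =>
    if h : (i : ℕ) = (j : ℕ) ∧ (i : ℕ) < r then
      algebraMap (Polynomial F) (RatFunc F) (ε ⟨i, h.2⟩) /
        algebraMap (Polynomial F) (RatFunc F) (ψ ⟨i, h.2⟩)
    else 0

section Helpers

open WithZero in
/-- valuation at infinity -/
def vI (F : Type*) [Field F] : Valuation (RatFunc F) (WithZero (Multiplicative ℤ)) := by
  classical exact RatFunc.inftyValuation F

open WithZero

lemma vI_ne {x : RatFunc F} (hx : x ≠ 0) : vI F x = exp x.intDegree := by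
  classical
  have := RatFunc.inftyValuation_of_nonzero F hx
  rw [← RatFunc.inftyValuation_apply] at this
  rw [← this, vI]

lemma vI_le_iff {x : RatFunc F} (hx : x ≠ 0) (d : ℤ) : vI F x ≤ exp d ↔ x.intDegree ≤ d := by
  rw [vI_ne hx, exp_le_exp]

lemma vI_C (a : F) : vI F (RatFunc.C a) ≤ 1 := by
  by_cases h : a = 0
  · simp [h]
  · rw [vI_ne (by simpa using h), RatFunc.intDegree_C]; simp

lemma vI_X_zpow (n : ℤ) : vI F (RatFunc.X ^ n) = exp n := by
  rw [map_zpow₀, vI_ne RatFunc.X_ne_zero, RatFunc.intDegree_X, ← WithZero.exp_zsmul]; simp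

lemma proper_iff (x : RatFunc F) : IsProperRat x ↔ vI F x ≤ 1 := by
  by_cases h : x = 0
  · simp [h, IsProperRat]
  · rw [← exp_zero, vI_le_iff h, IsProperRat, RatFunc.intDegree,
      degree_eq_natDegree (RatFunc.num_ne_zero h), degree_eq_natDegree x.denom_ne_zero]
    rw [Nat.cast_le]
    omega

lemma vI_det {n : Type*} [Fintype n] [DecidableEq n] (Y : Matrix n n (RatFunc F))
    (h : ∀ i j, vI F (Y i j) ≤ 1) : vI F Y.det ≤ 1 := by
  rw [det_apply]
  apply Valuation.map_sum_le
  intro σ _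
  have : vI F (∏ i, Y (σ i) i) ≤ 1 := by
    rw [map_prod]
    exact Finset.prod_le_one' fun i _ => h _ _
  rcases Int.units_eq_one_or (Equiv.Perm.sign σ) with h | h <;> simpa [h] using this

lemma vI_mul_le {a b c : Type*} [Fintype b] (A : Matrix a b (RatFunc F))
    (B : Matrix b c (RatFunc F)) (h : ∀ i j, vI F (A i j) ≤ 1) (j : c) (d : ℤ)
    (hB : ∀ k, vI F (B k j) ≤ exp d) (i : a) : vI F ((A * B) i j) ≤ exp d := by
  rw [mul_apply]
  apply Valuation.map_sum_le
  intro k _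
  rw [map_mul]
  exact (mul_le_mul' (h i k) (hB k)).trans (by simp)

lemma res_surj (x : RatFunc F) (hx : vI F x ≤ 1) : ∃ a : F, vI F (x - RatFunc.C a) < 1 := by
  by_cases h : vI F x < 1
  · exact ⟨0, by simpa using h⟩
  have h1 : vI F x = 1 := le_antisymm hx (not_lt.mp h)
  have hx0 : x ≠ 0 := by rintro rfl; simp at h1
  have h2 : x.intDegree = 0 := by
    rw [vI_ne hx0, ← exp_zero] at h1
    exact exp_injective h1
  have hn : x.num ≠ 0 := RatFunc.num_ne_zero hx0
  have hd : x.denom ≠ 0 := x.denom_ne_zero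
  refine ⟨x.num.leadingCoeff / x.denom.leadingCoeff, ?_⟩
  set a := x.num.leadingCoeff / x.denom.leadingCoeff with ha
  have hac : a ≠ 0 := by simp [ha, hn, hd]
  have hla : a * x.denom.leadingCoeff = x.num.leadingCoeff := by
    rw [ha]; field_simp
    have := leadingCoeff_ne_zero.mpr hd
    field_simp
  set P := x.num - Polynomial.C a * x.denom with hP
  have key : x - RatFunc.C a = algebraMap F[X] (RatFunc F) P / algebraMap F[X] (RatFunc F) x.denom := by
    have hd' : algebraMap F[X] (RatFunc F) x.denom ≠ 0 := by simpa using hd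
    rw [eq_div_iff hd', hP, map_sub, map_mul, sub_mul, RatFunc.algebraMap_C]
    congr 1
    conv_lhs => rw [← RatFunc.num_div_denom x]
    rw [RatFunc.num_div_denom x]
    nth_rewrite 1 [← RatFunc.num_div_denom x]
    field_simp
  by_cases hP0 : P = 0
  · rw [key, hP0]; simp
  have hdeg : P.natDegree < x.denom.natDegree := by
    have hnd : x.num.natDegree = x.denom.natDegree := by
      rw [RatFunc.intDegree] at h2; omega
    have : P.degree < x.num.degree := by
      apply degree_sub_lt_left
      · rw [degree_C_mul hac, degree_eq_natDegree hn, degree_eq_natDegree hd, hnd]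
      · exact hn
      · rw [leadingCoeff_mul, leadingCoeff_C, hla]
    rw [← hnd]
    exact natDegree_lt_natDegree hP0 this
  rw [key, vI_ne (by simp [hP0, hd]), RatFunc.intDegree_div (by simpa using hP0) (by simpa using hd),
    RatFunc.intDegree_polynomial, RatFunc.intDegree_polynomial, ← exp_zero, exp_lt_exp]
  omega

/-- singular leading coefficient gives a kernel vector. -/
lemma exists_ker {l : ℕ} (Y : Matrix (Fin l) (Fin l) (RatFunc F))
    (h : ∀ i j, vI F (Y i j) ≤ 1) (hdet : vI F Y.det < 1) :
    ∃ c : Fin l → F, c ≠ 0 ∧ ∀ i, vI F (∑ k, Y i k * RatFunc.C (c k)) < 1 := by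
  let O := (vI F).valuationSubring
  let Z : Matrix (Fin l) (Fin l) O := fun i j => ⟨Y i j, h i j⟩
  have hZY : Z.map (algebraMap O (RatFunc F)) = Y := by ext i j; rfl
  have hmem : ∀ z : O, IsLocalRing.residue O z = 0 ↔ vI F (z : RatFunc F) < 1 := by
    intro z
    rw [IsLocalRing.residue_eq_zero_iff, ValuationSubring.valuation_lt_one_iff]
    exact ((vI F).isEquiv_valuation_valuationSubring.lt_one_iff_lt_one).symm
  have hdZ : algebraMap O (RatFunc F) Z.det = Y.det := by
    rw [RingHom.map_det, ← hZY]; rfl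
  have h0 : (Z.map (IsLocalRing.residue O)).det = 0 := by
    have : IsLocalRing.residue O Z.det = 0 := by
      rw [hmem]
      rw [← hdZ] at hdet
      exact hdet
    rw [RingHom.map_det] at this
    exact this
  obtain ⟨w, hw0, hw⟩ := exists_mulVec_eq_zero_iff.mpr h0
  let Cm : F → O := fun a => ⟨RatFunc.C a, vI_C a⟩
  have hs : ∀ k, ∃ a : F, IsLocalRing.residue O (Cm a) = w k := by
    intro k
    obtain ⟨z, hz⟩ := IsLocalRing.residue_surjective (w k)
    obtain ⟨a, ha⟩ := res_surj (z : RatFunc F) z.2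
    refine ⟨a, ?_⟩
    rw [← hz, eq_comm, ← sub_eq_zero, ← map_sub, hmem]
    exact ha
  choose c hc using hs
  refine ⟨c, ?_, ?_⟩
  · rintro rfl
    apply hw0
    ext k
    rw [← hc k]
    have : Cm ((0 : Fin l → F) k) = 0 := by apply Subtype.ext; simp [Cm]
    rw [this, map_zero]; rfl
  · intro i
    have h1 := congrFun hw i
    have h2 : IsLocalRing.residue O (∑ k, Z i k * Cm (c k)) = 0 := by
      rw [map_sum]
      refine Eq.trans ?_ h1
      refine Finset.sum_congr rfl fun k _ => ?_
      rw [map_mul, hc]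
      rfl
    rw [hmem] at h2
    convert h2
    push_cast
    rfl

lemma toRF_mul {a b c : Type*} [Fintype b] (A : Matrix a b F[X]) (B : Matrix b c F[X]) :
    toRF (A * B) = toRF A * toRF B := by
  simp [toRF, Matrix.map_mul]

lemma toRF_det {a : Type*} [Fintype a] [DecidableEq a] (A : Matrix a a F[X]) :
    (toRF A).det = algebraMap F[X] (RatFunc F) A.det := by
  rw [RingHom.map_det]; rfl

lemma toRF_unit {a : Type*} [Fintype a] [DecidableEq a] (A : Matrix a a F[X]) (h : IsUnit A.det) :
    (toRF A).det ≠ 0 ∧ (toRF A).det.intDegree = 0 := by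
  rw [toRF_det, RatFunc.intDegree_polynomial, natDegree_eq_zero_of_isUnit h]
  exact ⟨by simpa using h.ne_zero, rfl⟩

lemma exp_sum' {l : ℕ} (d : Fin l → ℤ) : exp (∑ j, d j) = ∏ j, exp (d j) := by
  have : ∀ s : Finset (Fin l), exp (∑ j ∈ s, d j) = ∏ j ∈ s, exp (d j) := by
    intro s
    induction s using Finset.induction_on with
    | empty => simp
    | insert a s ha ih => rw [Finset.sum_insert ha, Finset.prod_insert ha, exp_add, ih]
  exact this _

/-- degree of determinant is bounded by the column degrees -/
lemma deg_det_le {l : ℕ} (A : Matrix (Fin l) (Fin l) (RatFunc F)) (d : Fin l → ℤ)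
    (h : ∀ i j, vI F (A i j) ≤ exp (d j)) : 
    (∀ i j, vI F ((A * (diagonal fun j => RatFunc.X ^ (- d j) : Matrix (Fin l) (Fin l) (RatFunc F))) i j) ≤ 1) ∧
    vI F (A * (diagonal fun j => RatFunc.X ^ (- d j) : Matrix (Fin l) (Fin l) (RatFunc F))).det = vI F A.det * exp (- ∑ j, d j) ∧
    (A.det ≠ 0 → A.det.intDegree ≤ ∑ j, d j) := by
  have h1 : ∀ i j, vI F ((A * (diagonal fun j => RatFunc.X ^ (- d j) : Matrix (Fin l) (Fin l) (RatFunc F))) i j) ≤ 1 := by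
    intro i j
    rw [mul_diagonal, map_mul, vI_X_zpow]
    calc _ ≤ exp (d j) * exp (- d j) := mul_le_mul' (h i j) le_rfl
      _ = 1 := by rw [← exp_add]; simp
  have h2 : vI F (A * (diagonal fun j => RatFunc.X ^ (- d j) : Matrix (Fin l) (Fin l) (RatFunc F))).det
      = vI F A.det * exp (- ∑ j, d j) := by
    rw [det_mul, det_diagonal, map_mul, map_prod]
    simp only [vI_X_zpow]
    rw [← Finset.sum_neg_distrib, exp_sum']
  refine ⟨h1, h2, fun h0 => ?_⟩
  have := vI_det _ h1
  rw [h2, vI_ne h0, ← exp_add, ← exp_zero, exp_le_exp] at this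
  omega

lemma exists_reduced {l : ℕ} (A : Matrix (Fin l) (Fin l) (RatFunc F)) (hA : A.det ≠ 0) :
    ∃ (W : Matrix (Fin l) (Fin l) F[X]) (d : Fin l → ℤ), IsUnit W.det ∧
      (∀ i j, vI F ((A * toRF W) i j) ≤ exp (d j)) ∧ ∑ j, d j ≤ A.det.intDegree := by
  classical
  let P : ℤ → Prop := fun z => ∃ (W : Matrix (Fin l) (Fin l) F[X]) (d : Fin l → ℤ),
    IsUnit W.det ∧ (∀ i j, vI F ((A * toRF W) i j) ≤ exp (d j)) ∧ ∑ j, d j = z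
  have hdetW : ∀ W : Matrix (Fin l) (Fin l) F[X], IsUnit W.det →
      (A * toRF W).det ≠ 0 ∧ (A * toRF W).det.intDegree = A.det.intDegree := by
    intro W hW
    obtain ⟨h1, h2⟩ := toRF_unit W hW
    rw [det_mul, RatFunc.intDegree_mul hA h1, h2]
    exact ⟨mul_ne_zero hA h1, by simp⟩
  have hbdd : ∃ b : ℤ, ∀ z, P z → b ≤ z := by
    refine ⟨A.det.intDegree, ?_⟩
    rintro z ⟨W, d, hW, hd, rfl⟩
    rw [← (hdetW W hW).2]
    exact (deg_det_le _ d hd).2.2 (hdetW W hW).1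
  have hne : ∃ z, P z := by
    refine ⟨_, 1, fun _ => ∑ i, ∑ j, |(A i j).intDegree|, by simp, ?_, rfl⟩
    intro i j
    have : toRF (1 : Matrix (Fin l) (Fin l) F[X]) = 1 := by simp [toRF]
    rw [this, mul_one]
    by_cases h : A i j = 0
    · simp [h]
    rw [vI_le_iff h]
    calc _ ≤ |(A i j).intDegree| := le_abs_self _
      _ ≤ ∑ j, |(A i j).intDegree| :=
        Finset.single_le_sum (f := fun j => |(A i j).intDegree|) (fun _ _ => abs_nonneg _)
          (Finset.mem_univ j)
      _ ≤ _ := Finset.single_le_sum (f := fun i => ∑ j, |(A i j).intDegree|)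
          (fun _ _ => Finset.sum_nonneg fun _ _ => abs_nonneg _) (Finset.mem_univ i)
  obtain ⟨z, ⟨W, d, hW, hd, rfl⟩, hmin⟩ := Int.exists_least_of_bdd hbdd hne
  refine ⟨W, d, hW, hd, ?_⟩
  by_contra! hlt
  obtain ⟨hY, hYdet, -⟩ := deg_det_le _ d hd
  obtain ⟨c, hc0, hc⟩ := exists_ker _ hY (by
    rw [hYdet, vI_ne (hdetW W hW).1, (hdetW W hW).2, ← exp_add, ← exp_zero, exp_lt_exp]
    omega)
  obtain ⟨k0, hk0⟩ := Function.ne_iff.mp hc0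
  obtain ⟨j, hj, hjmax⟩ := Finset.exists_max_image (Finset.univ.filter fun k => c k ≠ 0) d
    ⟨k0, by simpa using hk0⟩
  have hcj : c j ≠ 0 := by simpa using hj
  let b : Fin l → F[X] := fun k => Polynomial.C (c k) * Polynomial.X ^ (d j - d k).toNat
  let E : Matrix (Fin l) (Fin l) F[X] := (1 : Matrix (Fin l) (Fin l) F[X]).updateCol j b
  have hE : E.det = Polynomial.C (c j) := by
    have := cramer_apply (1 : Matrix (Fin l) (Fin l) F[X]) b j
    rw [cramer_one] at this
    simp only [E, ← this]
    simp [b]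
  have hEW : IsUnit (W * E).det := by
    rw [det_mul, hE]
    exact hW.mul (Polynomial.isUnit_C.mpr (isUnit_iff_ne_zero.mpr hcj))
  have hP : P (∑ k, Function.update d j (d j - 1) k) := by
    refine ⟨W * E, _, hEW, ?_, rfl⟩
    intro i k
    rw [toRF_mul, ← Matrix.mul_assoc]
    set M := A * toRF W with hM
    by_cases hk : k = j
    · subst hk
      rw [Function.update_self]
      have h1 : (M * toRF E) i k = RatFunc.X ^ (d k) *
          ∑ s, (M * (diagonal fun j => RatFunc.X ^ (- d j) :
            Matrix (Fin l) (Fin l) (RatFunc F))) i s * RatFunc.C (c s) := by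
        rw [mul_apply, Finset.mul_sum]
        refine Finset.sum_congr rfl fun s _ => ?_
        rw [mul_diagonal]
        by_cases hs : c s = 0
        · simp [hs, toRF, E, b]
        have hle : d s ≤ d k := hjmax s (by simpa using hs)
        have : (RatFunc.X : RatFunc F) ^ (d k - d s).toNat
            = RatFunc.X ^ (d k) * RatFunc.X ^ (- d s) := by
          rw [← zpow_add₀ RatFunc.X_ne_zero, ← zpow_natCast]
          congr 1
          omega
        simp only [toRF, E, b, map_apply, updateCol_self, map_mul, map_pow, RatFunc.algebraMap_C,
          RatFunc.algebraMap_X, this]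
        ring
      rw [h1, map_mul, vI_X_zpow]
      have h2 := hc i
      set y := ∑ s, (M * (diagonal fun j => RatFunc.X ^ (- d j) :
            Matrix (Fin l) (Fin l) (RatFunc F))) i s * RatFunc.C (c s) with hy
      by_cases hy0 : y = 0
      · simp [hy0]
      · rw [vI_ne hy0, ← exp_zero, exp_lt_exp] at h2
        rw [vI_ne hy0, ← exp_add, exp_le_exp]
        omega
    · rw [Function.update_of_ne hk]
      have : (M * toRF E) i k = M i k := by
        rw [mul_apply]
        simp [toRF, E, updateCol_ne hk, one_apply]
      rw [this]
      exact hd i k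
  have := hmin _ hP
  rw [Finset.sum_update_of_mem (Finset.mem_univ j)] at this
  rw [← Finset.add_sum_erase _ _ (Finset.mem_univ j), Finset.sdiff_singleton_eq_erase] at this
  omega

lemma core {a b : Type*} [Fintype a] [Fintype b] [DecidableEq b] {r l l' : ℕ}
    (G : Matrix a b (RatFunc F)) (U : Matrix b (Fin r ⊕ Fin l) F[X])
    (U' : Matrix (Fin r ⊕ Fin l) b F[X]) (B : Matrix b (Fin r ⊕ Fin l) (RatFunc F))
    (B' : Matrix (Fin r ⊕ Fin l) b (RatFunc F))
    (hUU' : toRF U * toRF U' = 1) (hU'U : toRF U' * toRF U = 1) (hBB' : B * B' = 1)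
    (hB'B : B' * B = 1)
    (hBp : ∀ i j, vI F (B i j) ≤ 1) (hB'p : ∀ i j, vI F (B' i j) ≤ 1)
    (hkU : ∀ x, G *ᵥ x = 0 ↔ ∀ i, (toRF U' *ᵥ x) (Sum.inl i) = 0)
    (hkB : ∀ x, G *ᵥ x = 0 ↔ ∀ i, (B' *ᵥ x) (Sum.inl i) = 0)
    (hd0 : (toRF U' * B).det ≠ 0) (hd1 : (toRF U' * B).det.intDegree = 0)
    (hfin : Module.finrank (RatFunc F) (LinearMap.ker G.mulVecLin) = l)
    (N : Matrix b (Fin l') F[X]) (hN : IsRightMinimalBasis G N) :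
    (toRF U' * B).toBlocks₁₁.det.intDegree = matOrder N := by
  obtain ⟨⟨hNi, hNs⟩, hmin⟩ := hN
  have hl : l' = l := by
    rw [← hfin, ← hNs, finrank_span_eq_card hNi, Fintype.card_fin]
  subst hl
  set T := toRF U' * B with hT
  have hTT' : T * (B' * toRF U) = 1 := by
    rw [hT, Matrix.mul_assoc, ← Matrix.mul_assoc B, hBB', Matrix.one_mul, hU'U]
  have h12 : T.toBlocks₁₂ = 0 := by
    ext i k
    have h1 : G *ᵥ (fun s => B s (Sum.inr k)) = 0 := by
      rw [hkB]
      intro i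
      have := congrFun (congrFun hB'B (Sum.inl i)) (Sum.inr k)
      exact this.trans (by simp)
    exact (hkU _).mp h1 i
  have h12' : (B' * toRF U).toBlocks₁₂ = 0 := by
    ext i k
    have h1 : G *ᵥ (fun s => toRF U s (Sum.inr k)) = 0 := by
      rw [hkU]
      intro i
      have := congrFun (congrFun hU'U (Sum.inl i)) (Sum.inr k)
      exact this.trans (by simp)
    exact (hkB _).mp h1 i
  have hTb : T = fromBlocks T.toBlocks₁₁ 0 T.toBlocks₂₁ T.toBlocks₂₂ := by
    rw [← h12, fromBlocks_toBlocks]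
  set A := (B' * toRF U).toBlocks₂₂ with hA
  have hTb' : (B' * toRF U) = fromBlocks (B' * toRF U).toBlocks₁₁ 0 (B' * toRF U).toBlocks₂₁ A := by
    rw [← h12', fromBlocks_toBlocks]
  have hdet : T.det = T.toBlocks₁₁.det * T.toBlocks₂₂.det := by
    conv_lhs => rw [hTb]
    rw [det_fromBlocks_zero₁₂]
  have hA1 : T.toBlocks₂₂ * A = 1 := by
    have h := hTT'
    rw [hTb, hTb', fromBlocks_multiply, ← fromBlocks_one] at h
    have := (fromBlocks_inj.mp h).2.2.2
    simpa using this
  have hne : T.toBlocks₁₁.det ≠ 0 ∧ T.toBlocks₂₂.det ≠ 0 := by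
    rw [hdet] at hd0
    exact ⟨left_ne_zero_of_mul hd0, right_ne_zero_of_mul hd0⟩
  have hA2 : T.toBlocks₂₂.det * A.det = 1 := by rw [← det_mul, hA1, det_one]
  have hAne : A.det ≠ 0 := right_ne_zero_of_mul (hA2 ▸ one_ne_zero)
  have hdeg1 : T.toBlocks₁₁.det.intDegree + T.toBlocks₂₂.det.intDegree = 0 := by
    rw [← RatFunc.intDegree_mul hne.1 hne.2, ← hdet, hd1]
  have hdeg2 : T.toBlocks₂₂.det.intDegree + A.det.intDegree = 0 := by
    rw [← RatFunc.intDegree_mul hne.2 hAne, hA2, RatFunc.intDegree_one]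
  have hGN : ∀ j, G *ᵥ (fun s => toRF N s j) = 0 := by
    intro j
    have : (toRF N)ᵀ j ∈ LinearMap.ker G.mulVecLin := by
      rw [← hNs]; exact Submodule.subset_span ⟨j, rfl⟩
    exact this
  symm
  apply le_antisymm
  · -- existence of a good basis
    obtain ⟨W, d, hW, hd, hsum⟩ := exists_reduced A hAne
    let E : Matrix (Fin r ⊕ Fin l') (Fin l') F[X] := fun s j => Sum.elim (fun _ => 0) (fun i => W i j) s
    let N' : Matrix b (Fin l') F[X] := U * E
    have hE1 : ∀ i j, toRF E (Sum.inl i) j = 0 := fun i j => map_zero (algebraMap F[X] (RatFunc F))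
    have hE2 : ∀ i j, toRF E (Sum.inr i) j = toRF W i j := fun i j => rfl
    have hUN : toRF U' * toRF N' = toRF E := by
      rw [toRF_mul, ← Matrix.mul_assoc, hU'U, Matrix.one_mul]
    have hinj : Function.Injective (toRF N').mulVec := by
      rw [← coe_mulVecLin, ← LinearMap.ker_eq_bot, LinearMap.ker_eq_bot']
      intro v hv
      by_contra hv0
      apply (toRF_unit W hW).1
      refine exists_mulVec_eq_zero_iff.mp ⟨v, hv0, ?_⟩
      have h1 : toRF U' *ᵥ (toRF N' *ᵥ v) = 0 := by
        rw [mulVecLin_apply] at hv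
        rw [hv, mulVec_zero]
      rw [mulVec_mulVec, hUN] at h1
      ext i
      exact congrFun h1 (Sum.inr i)
    have hli : LinearIndependent (RatFunc F) (fun j : Fin l' => (toRF N')ᵀ j) :=
      mulVec_injective_iff.mp hinj
    have hbasis : IsRightPolyBasis G N' := by
      refine ⟨hli, ?_⟩
      apply Submodule.eq_of_le_of_finrank_eq
      · rw [Submodule.span_le]
        rintro _ ⟨j, rfl⟩
        change G *ᵥ (toRF N')ᵀ j = 0
        rw [hkU]
        intro i
        have : (toRF U' * toRF N') (Sum.inl i) j = 0 := by
          rw [hUN, hE1]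
        exact this
      · rw [hfin, finrank_span_eq_card hli, Fintype.card_fin]
    have hBN : toRF N' = B * (B' * toRF U * toRF E) := by
      rw [Matrix.mul_assoc, ← Matrix.mul_assoc, hBB', Matrix.one_mul, toRF_mul]
    have hval : ∀ i j, vI F (toRF N' i j) ≤ exp (d j) := by
      intro i j
      rw [hBN]
      apply vI_mul_le _ _ hBp
      intro s
      rw [hTb', mul_apply, Fintype.sum_sum_type]
      cases s with
      | inl s => simp [hE1]
      | inr s =>
        have h1 : ∑ x, A s x * toRF W x j = (A * toRF W) s j := rfl
        have h2 := hd s j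
        rw [← h1] at h2
        simpa [hE1, hE2] using h2
    have hcol : ∀ j, (colDegNat N' j : ℤ) ≤ d j := by
      intro j
      have hd0 : 0 ≤ d j := by
        have : (toRF N')ᵀ j ≠ 0 := hli.ne_zero j
        obtain ⟨i, hi⟩ := Function.ne_iff.mp this
        have hi' : toRF N' i j ≠ 0 := hi
        have h1 := hval i j
        rw [vI_le_iff hi'] at h1
        simp only [toRF, map_apply, RatFunc.intDegree_polynomial] at h1
        omega
      obtain ⟨n, hn⟩ := Int.eq_ofNat_of_zero_le hd0
      rw [hn, Nat.cast_le, colDegNat]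
      apply Finset.sup_le
      intro i _
      by_cases hz : N' i j = 0
      · simp [hz]
      · have h1 := hval i j
        rw [vI_le_iff (by simpa [toRF] using hz)] at h1
        simp only [toRF, map_apply, RatFunc.intDegree_polynomial] at h1
        omega
    have h1 := hmin _ N' hbasis
    have h2 : (matOrder N' : ℤ) ≤ ∑ j, d j := by
      rw [matOrder]
      push_cast
      exact Finset.sum_le_sum fun j _ => hcol j
    omega
  · -- lower bound
    let W : Matrix (Fin l') (Fin l') F[X] := fun i j => (U' * N) (Sum.inr i) j
    let Y : Matrix (Fin l') (Fin l') (RatFunc F) := fun i j => (B' * toRF N) (Sum.inr i) j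
    have hWe : ∀ i j, toRF W i j = (toRF U' * toRF N) (Sum.inr i) j := by
      intro i j; rw [← toRF_mul]; rfl
    have hWY : toRF W = T.toBlocks₂₂ * Y := by
      ext i j
      have h1 : toRF U' * toRF N = T * (B' * toRF N) := by
        rw [hT, Matrix.mul_assoc, ← Matrix.mul_assoc B, hBB', Matrix.one_mul]
      have h2 : ∀ k, (B' * toRF N) (Sum.inl k) j = 0 := fun k => (hkB _).mp (hGN j) k
      rw [hWe, h1, mul_apply, Fintype.sum_sum_type]
      simp only [h2, mul_zero, Finset.sum_const_zero, zero_add]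
      rfl
    have hinj : ∀ v, toRF N *ᵥ v = 0 → v = 0 := by
      have : Function.Injective (toRF N).mulVec := by
        rw [mulVec_injective_iff]; exact hNi
      intro v hv
      exact this (by simpa using hv)
    have hWd : (toRF W).det ≠ 0 := by
      intro h0
      obtain ⟨v, hv0, hv⟩ := exists_mulVec_eq_zero_iff.mpr h0
      apply hv0
      apply hinj
      have h3 : (toRF U' * toRF N) *ᵥ v = 0 := by
        ext s
        cases s with
        | inl i =>
          have h2 : ∀ k, (toRF U' * toRF N) (Sum.inl i) k = 0 := fun k => (hkU _).mp (hGN k) i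
          simp [mulVec, dotProduct, h2]
        | inr i =>
          have := congrFun hv i
          simp only [mulVec, dotProduct, hWe] at this
          exact this
      have h4 : toRF U *ᵥ ((toRF U' * toRF N) *ᵥ v) = 0 := by rw [h3, mulVec_zero]
      rw [mulVec_mulVec, ← Matrix.mul_assoc, hUU', Matrix.one_mul] at h4
      exact h4
    have hYd : Y.det ≠ 0 := by
      rw [hWY, det_mul] at hWd
      exact right_ne_zero_of_mul hWd
    have h5 : 0 ≤ T.toBlocks₂₂.det.intDegree + Y.det.intDegree := by
      rw [← RatFunc.intDegree_mul hne.2 hYd, ← det_mul, ← hWY, toRF_det,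
        RatFunc.intDegree_polynomial]
      positivity
    have h6 : Y.det.intDegree ≤ ∑ j, (colDegNat N j : ℤ) := by
      apply (deg_det_le Y _ _).2.2 hYd
      intro i j
      apply vI_mul_le _ _ hB'p
      intro k
      by_cases hz : N k j = 0
      · simp [toRF, hz]
      · rw [vI_le_iff (by simpa [toRF] using hz)]
        simp only [toRF, map_apply, RatFunc.intDegree_polynomial, Nat.cast_le, colDegNat]
        exact Finset.le_sup (f := fun i => (N i j).natDegree) (Finset.mem_univ k)
    rw [matOrder]
    push_cast
    omega

/-- generic rectangular diagonal -/
def DD (p m r : ℕ) (δ : Fin r → RatFunc F) : Matrix (Fin p) (Fin m) (RatFunc F) :=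
  fun i j => if h : (i : ℕ) = (j : ℕ) ∧ (i : ℕ) < r then δ ⟨i, h.2⟩ else 0

lemma DD_transpose (p m r : ℕ) (δ : Fin r → RatFunc F) : (DD p m r δ)ᵀ = DD m p r δ := by
  ext i j
  simp only [transpose_apply, DD]
  by_cases h : (j : ℕ) = i ∧ (j : ℕ) < r
  · have h' : (i : ℕ) = j ∧ (i : ℕ) < r := ⟨h.1.symm, h.1 ▸ h.2⟩
    rw [dif_pos h, dif_pos h']
    congr 2
    exact h.1
  · have h' : ¬ ((i : ℕ) = j ∧ (i : ℕ) < r) := fun h' => h ⟨h'.1.symm, h'.1 ▸ h'.2⟩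
    rw [dif_neg h, dif_neg h']

lemma DD_blocks (k l r : ℕ) (δ : Fin r → RatFunc F) :
    (DD (r + k) (r + l) r δ).submatrix finSumFinEquiv finSumFinEquiv
      = fromBlocks (diagonal δ) 0 0 0 := by
  ext i j
  rcases i with i | i <;> rcases j with j | j
  · by_cases h : i = j
    · subst h; simp [DD]
    · simp [DD, h, Fin.val_inj]
  · have := i.2
    have h : ¬ ((i : ℕ) = r + j ∧ (i : ℕ) < r) := by omega
    exact dif_neg h
  · simp [DD]
  · simp [DD]

/-- kernel from a diagonal form -/
lemma ker_of_form {k l r : ℕ} (G : Matrix (Fin (r + k)) (Fin (r + l)) (RatFunc F))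
    (P P' : Matrix (Fin (r + k)) (Fin (r + k)) (RatFunc F))
    (Q Q' : Matrix (Fin (r + l)) (Fin (r + l)) (RatFunc F))
    (hP : P' * P = 1) (hQ : Q * Q' = 1)
    (δ : Fin r → RatFunc F) (hδ : ∀ i, δ i ≠ 0) (h : P * G * Q = DD _ _ r δ)
    (x : Fin (r + l) → RatFunc F) :
    G *ᵥ x = 0 ↔ ∀ i, ((Q'.submatrix finSumFinEquiv id : Matrix (Fin r ⊕ Fin l) _ _) *ᵥ x)
      (Sum.inl i) = 0 := by
  have h1 : G *ᵥ x = 0 ↔ (DD (r + k) (r + l) r δ) *ᵥ (Q' *ᵥ x) = 0 := by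
    rw [← h, mulVec_mulVec, Matrix.mul_assoc _ Q, hQ, Matrix.mul_one, ← mulVec_mulVec]
    constructor
    · intro h; rw [h, mulVec_zero]
    · intro h
      have := congrArg (P' *ᵥ ·) h
      simpa [mulVec_mulVec, ← Matrix.mul_assoc, hP] using this
  rw [h1]
  set y := Q' *ᵥ x with hy
  have h2 : ∀ i : Fin r, ((Q'.submatrix finSumFinEquiv id : Matrix (Fin r ⊕ Fin l) _ _) *ᵥ x)
      (Sum.inl i) = y (finSumFinEquiv (Sum.inl i)) := fun i => rfl
  simp only [h2]
  have h3 : ∀ s : Fin r ⊕ Fin k, (DD (r + k) (r + l) r δ *ᵥ y) (finSumFinEquiv s)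
      = ((fromBlocks (diagonal δ) 0 0 0 : Matrix (Fin r ⊕ Fin k) (Fin r ⊕ Fin l) (RatFunc F)) *ᵥ
        (y ∘ finSumFinEquiv)) s := by
    intro s
    rw [← DD_blocks, submatrix_mulVec_equiv]
    simp [Function.comp_def]
  constructor
  · intro h i
    have := h3 (Sum.inl i)
    rw [h, fromBlocks_mulVec] at this
    simp [mulVec_diagonal, hδ] at this
    simpa using this
  · intro h
    ext s
    obtain ⟨s, rfl⟩ := finSumFinEquiv.surjective s
    rw [h3, fromBlocks_mulVec]
    have : (y ∘ finSumFinEquiv) ∘ Sum.inl = (0 : Fin r → RatFunc F) := by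
      ext i; exact h i
    cases s <;> simp [this]

lemma biproper_det {n : ℕ} (B B' : Matrix (Fin n) (Fin n) (RatFunc F)) (h : ProperMat B)
    (h' : ProperMat B') (hBB : B * B' = 1) : B.det ≠ 0 ∧ B.det.intDegree = 0 := by
  have h1 : B.det * B'.det = 1 := by rw [← det_mul, hBB, det_one]
  have hB : B.det ≠ 0 := left_ne_zero_of_mul (h1 ▸ one_ne_zero)
  have hB' : B'.det ≠ 0 := right_ne_zero_of_mul (h1 ▸ one_ne_zero)
  have h2 := vI_det B fun i j => (proper_iff _).mp (h i j)
  have h3 := vI_det B' fun i j => (proper_iff _).mp (h' i j)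
  rw [← exp_zero, vI_le_iff hB] at h2
  rw [← exp_zero, vI_le_iff hB'] at h3
  have h4 := RatFunc.intDegree_mul hB hB'
  rw [h1, RatFunc.intDegree_one] at h4
  exact ⟨hB, by omega⟩

lemma right_part {r k l l' : ℕ} (G : Matrix (Fin (r + k)) (Fin (r + l)) (RatFunc F))
    (hrank : G.rank = r)
    (P P' : Matrix (Fin (r + k)) (Fin (r + k)) (RatFunc F)) (hP : P' * P = 1)
    (P₁ P₁' : Matrix (Fin (r + k)) (Fin (r + k)) (RatFunc F)) (hP₁ : P₁' * P₁ = 1)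
    (U V : Matrix (Fin (r + l)) (Fin (r + l)) F[X]) (hUV : U * V = 1) (hVU : V * U = 1)
    (B B' : Matrix (Fin (r + l)) (Fin (r + l)) (RatFunc F)) (hBB' : B * B' = 1) (hB'B : B' * B = 1)
    (hB : ProperMat B) (hB' : ProperMat B')
    (δ δ' : Fin r → RatFunc F) (hδ : ∀ i, δ i ≠ 0) (hδ' : ∀ i, δ' i ≠ 0)
    (h1 : P * G * toRF U = DD _ _ r δ) (h2 : P₁ * G * B = DD _ _ r δ')
    (N : Matrix (Fin (r + l)) (Fin l') F[X]) (hN : IsRightMinimalBasis G N) :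
    ((toRF V * B).submatrix (finSumFinEquiv : Fin r ⊕ Fin l ≃ _)
      finSumFinEquiv).toBlocks₁₁.det.intDegree = matOrder N := by
  have h1' : toRF (1 : Matrix (Fin (r + l)) (Fin (r + l)) F[X]) = 1 := by simp [toRF]
  have hUV' : toRF U * toRF V = 1 := by rw [← toRF_mul, hUV, h1']
  have hVU' : toRF V * toRF U = 1 := by rw [← toRF_mul, hVU, h1']
  let e : Fin r ⊕ Fin l ≃ Fin (r + l) := finSumFinEquiv
  have hTe : toRF (V.submatrix e id) * B.submatrix id e = (toRF V * B).submatrix e e := rfl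
  have hVd : IsUnit V.det := by
    have : V.det * U.det = 1 := by rw [← det_mul, hVU, det_one]
    exact IsUnit.of_mul_eq_one _ this
  obtain ⟨a1, a2⟩ := toRF_unit V hVd
  obtain ⟨b1, b2⟩ := biproper_det B B' hB hB' hBB'
  have hdet : (toRF (V.submatrix e id) * B.submatrix id e).det = (toRF V).det * B.det := by
    rw [hTe, det_submatrix_equiv_self, det_mul]
  refine core G (U.submatrix id e) (V.submatrix e id) (B.submatrix id e) (B'.submatrix e id)
    ?_ ?_ ?_ ?_ (fun i j => (proper_iff _).mp (hB _ _)) (fun i j => (proper_iff _).mp (hB' _ _))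
    (ker_of_form G P P' (toRF U) (toRF V) hP hUV' δ hδ h1)
    (ker_of_form G P₁ P₁' B B' hP₁ hBB' δ' hδ' h2) ?_ ?_ ?_ N hN
  · change (toRF U).submatrix id e * (toRF V).submatrix e id = 1
    rw [submatrix_mul_equiv, hUV', submatrix_id_id]
  · change (toRF V * toRF U).submatrix e e = 1
    rw [hVU', submatrix_one_equiv]
  · rw [submatrix_mul_equiv, hBB', submatrix_id_id]
  · change (B' * B).submatrix e e = 1
    rw [hB'B, submatrix_one_equiv]
  · rw [hdet]; exact mul_ne_zero a1 b1
  · rw [hdet, RatFunc.intDegree_mul a1 b1, a2, b2]; rfl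
  · have := LinearMap.finrank_range_add_finrank_ker G.mulVecLin
    rw [Module.finrank_fin_fun] at this
    rw [Matrix.rank] at hrank
    omega

lemma intDegree_prod {r : ℕ} (δ : Fin r → RatFunc F) (h : ∀ i, δ i ≠ 0) :
    (∏ i, δ i).intDegree = ∑ i, (δ i).intDegree := by
  have h1 : vI F (∏ i, δ i) = exp (∑ i, (δ i).intDegree) := by
    rw [map_prod, exp_sum']
    exact Finset.prod_congr rfl fun i _ => vI_ne (h i)
  rw [vI_ne (Finset.prod_ne_zero_iff.mpr fun i _ => h i)] at h1
  exact exp_injective h1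

lemma intDegree_X_zpow (n : ℤ) : ((RatFunc.X : RatFunc F) ^ n).intDegree = n := by
  have := vI_X_zpow (F := F) n
  rw [vI_ne (zpow_ne_zero _ RatFunc.X_ne_zero)] at this
  exact exp_injective this

lemma colDegs_sum {a : Type*} [Fintype a] {l : ℕ} (N : Matrix a (Fin l) F[X]) :
    (colDegs N).sum = matOrder N := rfl

lemma left_right {a b : Type*} [Fintype a] [Fintype b] {l : ℕ}
    (M : Matrix a b (RatFunc F)) (N : Matrix a (Fin l) F[X]) :
    IsLeftMinimalBasis M N ↔ IsRightMinimalBasis Mᵀ N := by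
  have : LinearMap.ker M.vecMulLinear = LinearMap.ker Mᵀ.mulVecLin := by
    ext x
    simp [mulVec_transpose]
  simp only [IsLeftMinimalBasis, IsRightMinimalBasis, IsLeftPolyBasis, IsRightPolyBasis, this]


end Helpers

/-- **Van Dooren's index sum theorem, reformulated.** If `G` has normal rank
`r`, finite Smith–McMillan form `Diag(ε₁/ψ₁, …, ε_r/ψ_r, 0)` and invariant orders at infinity
`q₁ ≤ … ≤ q_r`, then the sum `μ(G)` of all right and left minimal indices of `G` equals
`Σ deg ψᵢ − Σ deg εᵢ − Σ qᵢ`. -/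
theorem index_sum_theorem
    {p m r : ℕ}
    (G : Matrix (Fin p) (Fin m) (RatFunc F))
    (hrank : G.rank = r)
    (ε ψ : Fin r → Polynomial F)
    (hεmonic : ∀ i, (ε i).Monic) (hψmonic : ∀ i, (ψ i).Monic)
    (hcop : ∀ i, IsCoprime (ε i) (ψ i))
    (hεdvd : ∀ i j : Fin r, i ≤ j → ε i ∣ ε j)
    (hψdvd : ∀ i j : Fin r, i ≤ j → ψ j ∣ ψ i)
    (U₁ : Matrix (Fin p) (Fin p) (Polynomial F))
    (U₂ : Matrix (Fin m) (Fin m) (Polynomial F))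
    (hU₁ : Unimodular U₁) (hU₂ : Unimodular U₂)
    (hSM : toRF U₁ * G * toRF U₂ = SMDiag p m r ε ψ)
    (q : Fin r → ℤ)
    (hq : HasInfOrders G q)
    (sr sl : Multiset ℕ)
    (hsr : HasRightMinimalIndices G sr)
    (hsl : HasLeftMinimalIndices G sl) :
    ((sr.sum : ℤ) + (sl.sum : ℤ)) =
      (∑ i, ((ψ i).natDegree : ℤ)) - (∑ i, ((ε i).natDegree : ℤ)) - ∑ i, q i := by
  obtain ⟨-, B₁, B₂, ⟨hB₁, B₁', hB₁', hB₁1, hB₁2⟩, ⟨hB₂, B₂', hB₂', hB₂1, hB₂2⟩, hInf⟩ := hq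
  obtain ⟨lr, Nr, hNr, rfl⟩ := hsr
  obtain ⟨ll, Nl, hNl, rfl⟩ := hsl
  rw [colDegs_sum, colDegs_sum]
  rw [left_right] at hNl
  obtain ⟨k, rfl⟩ : ∃ k, p = r + k := Nat.exists_eq_add_of_le (by
    simpa [hrank] using Matrix.rank_le_card_height G)
  obtain ⟨l, rfl⟩ : ∃ l, m = r + l := Nat.exists_eq_add_of_le (by
    simpa [hrank] using Matrix.rank_le_card_width G)
  have hε0 : ∀ i, algebraMap F[X] (RatFunc F) (ε i) ≠ 0 := fun i => by
    simpa using (hεmonic i).ne_zero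
  have hψ0 : ∀ i, algebraMap F[X] (RatFunc F) (ψ i) ≠ 0 := fun i => by
    simpa using (hψmonic i).ne_zero
  let δ : Fin r → RatFunc F := fun i =>
    algebraMap F[X] (RatFunc F) (ε i) / algebraMap F[X] (RatFunc F) (ψ i)
  let δ' : Fin r → RatFunc F := fun i => RatFunc.X ^ (- q i)
  have hδ : ∀ i, δ i ≠ 0 := fun i => div_ne_zero (hε0 i) (hψ0 i)
  have hδ' : ∀ i, δ' i ≠ 0 := fun i => zpow_ne_zero _ RatFunc.X_ne_zero
  have hSM' : toRF U₁ * G * toRF U₂ = DD _ _ r δ := hSM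
  have hInf' : B₁ * G * B₂ = DD _ _ r δ' := hInf
  have e1 := Matrix.mul_nonsing_inv U₁ hU₁
  have e2 := Matrix.nonsing_inv_mul U₁ hU₁
  have f1 := Matrix.mul_nonsing_inv U₂ hU₂
  have f2 := Matrix.nonsing_inv_mul U₂ hU₂
  set V₁ := U₁⁻¹
  set V₂ := U₂⁻¹
  have hone : ∀ n : ℕ, toRF (1 : Matrix (Fin n) (Fin n) F[X]) = 1 := fun n => by simp [toRF]
  have e1' : toRF U₁ * toRF V₁ = 1 := by rw [← toRF_mul, e1, hone]
  have e2' : toRF V₁ * toRF U₁ = 1 := by rw [← toRF_mul, e2, hone]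
  have f1' : toRF U₂ * toRF V₂ = 1 := by rw [← toRF_mul, f1, hone]
  have f2' : toRF V₂ * toRF U₂ = 1 := by rw [← toRF_mul, f2, hone]
  have tr : ∀ {n : ℕ} {R : Type _} [CommRing R] {A B : Matrix (Fin n) (Fin n) R}, A * B = 1 →
      Bᵀ * Aᵀ = 1 := by
    intro n R _ A B h
    rw [← transpose_mul, h, transpose_one]
  have hR := right_part G hrank (toRF U₁) (toRF V₁) e2' B₁ B₁' hB₁2 U₂ V₂ f1 f2 B₂ B₂'
    hB₂1 hB₂2 hB₂ hB₂' δ δ' hδ hδ' hSM' hInf' Nr hNr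
  have hL := right_part Gᵀ (by rw [rank_transpose, hrank]) (toRF U₂)ᵀ (toRF V₂)ᵀ (tr f1') B₂ᵀ B₂'ᵀ
    (tr hB₂1) U₁ᵀ V₁ᵀ (tr e2) (tr e1) B₁ᵀ B₁'ᵀ (tr hB₁2) (tr hB₁1)
    (fun i j => hB₁ j i) (fun i j => hB₁' j i) δ δ' hδ hδ'
    (by
      change (toRF U₂)ᵀ * Gᵀ * (toRF U₁)ᵀ = _
      rw [← DD_transpose, ← hSM', transpose_mul, transpose_mul, Matrix.mul_assoc])
    (by rw [← DD_transpose, ← hInf', transpose_mul, transpose_mul, Matrix.mul_assoc]) Nl hNl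
  let ep : Fin r ⊕ Fin k ≃ Fin (r + k) := finSumFinEquiv
  let em : Fin r ⊕ Fin l ≃ Fin (r + l) := finSumFinEquiv
  set S := (B₁ * toRF V₁).submatrix ep ep with hS
  set T := (toRF V₂ * B₂).submatrix em em with hT
  have hL' : S.toBlocks₁₁.det.intDegree = matOrder Nl := by
    rw [← hL, ← det_transpose S.toBlocks₁₁]
    congr 2
    have : toRF V₁ᵀ * B₁ᵀ = (B₁ * toRF V₁)ᵀ := by rw [transpose_mul]; rfl
    rw [this]
    rfl
  have hR' : T.toBlocks₁₁.det.intDegree = matOrder Nr := hR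
  have hprod : (B₁ * toRF V₁) * DD (r + k) (r + l) r δ * (toRF V₂ * B₂) = DD (r + k) (r + l) r δ' := by
    rw [← hSM', ← hInf']
    calc _ = B₁ * (toRF V₁ * toRF U₁) * G * (toRF U₂ * toRF V₂) * B₂ := by
          simp only [Matrix.mul_assoc]
      _ = _ := by rw [e2', f1']; simp
  have hblk : S * (fromBlocks (diagonal δ) 0 0 0 : Matrix (Fin r ⊕ Fin k) (Fin r ⊕ Fin l) (RatFunc F)) * T
      = fromBlocks (diagonal δ') 0 0 0 := by
    rw [← DD_blocks k l r δ, ← DD_blocks k l r δ', hS, hT, submatrix_mul_equiv, submatrix_mul_equiv,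
      hprod]
  rw [← fromBlocks_toBlocks S, ← fromBlocks_toBlocks T, fromBlocks_multiply, fromBlocks_multiply]
    at hblk
  have h11 := (fromBlocks_inj.mp hblk).1
  have hd := congrArg det (show S.toBlocks₁₁ * diagonal δ * T.toBlocks₁₁ = diagonal δ' by
    simpa using h11)
  rw [det_mul, det_mul, det_diagonal, det_diagonal] at hd
  have hp' : ∏ i, δ' i ≠ 0 := Finset.prod_ne_zero_iff.mpr fun i _ => hδ' i
  have hp : ∏ i, δ i ≠ 0 := Finset.prod_ne_zero_iff.mpr fun i _ => hδ i
  have hT0 : T.toBlocks₁₁.det ≠ 0 := by rw [← hd] at hp'; exact right_ne_zero_of_mul hp'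
  have hS0 : S.toBlocks₁₁.det ≠ 0 := by
    rw [← hd] at hp'; exact left_ne_zero_of_mul (left_ne_zero_of_mul hp')
  have hfinal := congrArg RatFunc.intDegree hd
  rw [RatFunc.intDegree_mul (mul_ne_zero hS0 hp) hT0, RatFunc.intDegree_mul hS0 hp, hL', hR',
    intDegree_prod δ hδ, intDegree_prod δ' hδ'] at hfinal
  have g1 : ∀ i, (δ i).intDegree = ((ε i).natDegree : ℤ) - (ψ i).natDegree := fun i => by
    rw [RatFunc.intDegree_div (hε0 i) (hψ0 i), RatFunc.intDegree_polynomial,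
      RatFunc.intDegree_polynomial]
  have g2 : ∀ i, (δ' i).intDegree = - q i := fun i => intDegree_X_zpow _
  simp only [g1, g2, Finset.sum_sub_distrib, Finset.sum_neg_distrib] at hfinal
  linarith

end
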